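/- arXiv:1808.09312 — 2 statements merged into one kernel-verified Lean document; each statement's English description precedes it below -/
import Mathlib

section
/- Let Ξ be a finite polytopal complex in ℝ^d and let Q ⊆ ℝ^d be an open convex set. Then the union of those members of Ξ that are disjoint from Q is a strong deformation retract of (⋃Ξ) \ Q. -/
/-- `A` is a strong deformation retract of `B`. -/
def IsStrongDeformationRetract {E : Type*} [TopologicalSpace E] (A B : Set E) : Prop :=
  A ⊆ B ∧ ∃ H : C(↥B × ↥unitInterval, ↥B),
    (∀ b : B, H (b, 0) = b) ∧
    (∀ b : B, (b : E) ∈ A → ∀ t, H (b, t) = b) ∧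
    (∀ b : B, ((H (b, 1) : E) ∈ A))

/-- A polytope is the convex hull of a finite set of points. -/
def IsPolytope {E : Type*} [AddCommGroup E] [Module ℝ E] (P : Set E) : Prop :=
  ∃ S : Finset E, P = convexHull ℝ (S : Set E)

/-- A finite polytopal complex: a finite collection of polytopes closed under taking
(exposed) faces, such that the intersection of any two members is a face of each. -/
def IsPolytopalComplex {d : ℕ} (Ξ : Finset (Set (EuclideanSpace ℝ (Fin d)))) : Prop :=
  (∀ P ∈ Ξ, IsPolytope P) ∧
  (∀ P ∈ Ξ, ∀ F : Set (EuclideanSpace ℝ (Fin d)), IsExposed ℝ P F → F ∈ Ξ) ∧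
  (∀ P ∈ Ξ, ∀ P' ∈ Ξ, IsExposed ℝ P (P ∩ P') ∧ IsExposed ℝ P' (P ∩ P'))

open Set Topology

theorem sdr_refl {E : Type*} [TopologicalSpace E] (A : Set E) :
    IsStrongDeformationRetract A A :=
  ⟨Subset.rfl, ⟨fun p => p.1, continuous_fst⟩, fun _ => rfl, fun _ _ _ => rfl, fun b => b.2⟩

theorem sdr_trans {E : Type*} [TopologicalSpace E] {A C B : Set E}
    (h1 : IsStrongDeformationRetract A C) (h2 : IsStrongDeformationRetract C B) :
    IsStrongDeformationRetract A B := by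
  obtain ⟨hAC, G, G0, GA, G1⟩ := h1
  obtain ⟨hCB, H, H0, HC, H1⟩ := h2
  refine ⟨hAC.trans hCB, ?_⟩
  let pr : ℝ → unitInterval := Set.projIcc 0 1 zero_le_one
  have hpr : Continuous pr := continuous_projIcc
  let r : B → C := fun b => ⟨H (b, 1), H1 b⟩
  have hr : Continuous r := by
    apply Continuous.subtype_mk
    fun_prop
  let f : B × unitInterval → B := fun p => H (p.1, pr (2 * (p.2 : ℝ)))
  let g : B × unitInterval → B := fun p =>
    ⟨G (r p.1, pr (2 * (p.2 : ℝ) - 1)), hCB (Subtype.coe_prop _)⟩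
  have hf : Continuous f := by fun_prop
  have hg : Continuous g := by
    apply Continuous.subtype_mk
    fun_prop
  have hpr0 : pr 0 = 0 := Set.projIcc_left _
  have hpr1 : pr 1 = 1 := Set.projIcc_right _
  have key : Continuous (fun p : B × unitInterval =>
      if (p.2 : ℝ) ≤ 1 / 2 then f p else g p) := by
    apply Continuous.if_le hf hg (by fun_prop) (by fun_prop)
    intro p hp
    apply Subtype.ext
    simp only [f, g, hp]
    norm_num [hpr0, hpr1, G0, r]
  refine ⟨⟨_, key⟩, ?_, ?_, ?_⟩
  · intro b
    simp [f, hpr0, H0]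
  · intro b hb t
    have hrb : (r b : E) = b := by simp [r, HC b (hAC hb)]
    simp only [ContinuousMap.coe_mk]
    split_ifs
    · exact HC b (hAC hb) _
    · apply Subtype.ext
      simp only [g]
      rw [GA (r b) (by rw [hrb]; exact hb), hrb]
  · intro b
    simp only [ContinuousMap.coe_mk]
    norm_num [g, hpr1, G1]

/-- A point of `P ∩ Q` in the relative interior of `P`. -/
theorem exists_core {d : ℕ} {P Q : Set (EuclideanSpace ℝ (Fin d))} (hP : Convex ℝ P)
    (hQ : IsOpen Q) (hPQ : (P ∩ Q).Nonempty) :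
    ∃ (V : Submodule ℝ (EuclideanSpace ℝ (Fin d))) (q : EuclideanSpace ℝ (Fin d)),
      q ∈ P ∧ q ∈ Q ∧ (∀ x ∈ P, x - q ∈ V) ∧
      {v : V | q + (v : EuclideanSpace ℝ (Fin d)) ∈ P} ∈ 𝓝 (0 : V) := by
  obtain ⟨p, hpP, hpQ⟩ := hPQ
  let V := Submodule.span ℝ ((fun x => x - p) '' P)
  have hV : ∀ x ∈ P, x - p ∈ V := fun x hx => Submodule.subset_span ⟨x, hx, rfl⟩
  let K : Set V := {v : V | p + (v : EuclideanSpace ℝ (Fin d)) ∈ P}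
  have hK : Convex ℝ K := by
    intro x hx y hy a b ha hb hab
    have := hP hx hy ha hb hab
    simp only [K, mem_ofPred_eq] at *
    convert this using 1
    have : p = (a + b) • p := by rw [hab, one_smul]
    nth_rewrite 1 [this]
    simp only [Submodule.coe_add, Submodule.coe_smul, smul_add, add_smul]
    abel
  have h0 : (0 : V) ∈ K := by simpa [K] using hpP
  have hspan : Submodule.span ℝ K = ⊤ := by
    have : K = Subtype.val ⁻¹' ((fun x => x - p) '' P) := by
      ext v
      simp only [K, mem_ofPred_eq, mem_preimage, mem_image]
      constructor
      · intro h; exact ⟨_, h, by simp⟩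
      · rintro ⟨x, hx, h⟩; rw [← h]; simpa using hx
    rw [this]
    exact Submodule.span_span_coe_preimage
  have hint : (interior K).Nonempty := by
    rw [hK.interior_nonempty_iff_affineSpan_eq_top]
    rw [← AffineSubspace.direction_eq_top_iff_of_nonempty
      ((affineSpan_nonempty ℝ).2 ⟨0, h0⟩), direction_affineSpan, eq_top_iff, ← hspan]
    apply Submodule.span_le.2
    intro v hv
    simpa using vsub_mem_vectorSpan ℝ hv h0
  have hcl := hK.closure_interior_eq_closure_of_nonempty_interior hint
  have h0c : (0 : V) ∈ closure (interior K) := hcl ▸ subset_closure h0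
  have hO : IsOpen {v : V | p + (v : EuclideanSpace ℝ (Fin d)) ∈ Q} :=
    hQ.preimage (by fun_prop)
  obtain ⟨v, hvQ, hvK⟩ := mem_closure_iff.1 h0c _ hO (by simpa using hpQ)
  refine ⟨V, p + v, (interior_subset hvK : v ∈ K), hvQ, ?_, ?_⟩
  · intro x hx
    have := V.sub_mem (hV x hx) v.2
    convert this using 1
    abel
  · have hc : Continuous (fun w : V => v + w) := by fun_prop
    have : (fun w : V => v + w) ⁻¹' (interior K) ∈ 𝓝 (0 : V) :=
      (isOpen_interior.preimage hc).mem_nhds (by simpa using hvK)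
    filter_upwards [this] with w hw
    have := interior_subset hw
    simpa [K, add_assoc] using this

theorem step {d : ℕ} (Ξ : Finset (Set (EuclideanSpace ℝ (Fin d))))
    (hΞ : IsPolytopalComplex Ξ)
    (Q : Set (EuclideanSpace ℝ (Fin d))) (hQo : IsOpen Q) (hQconv : Convex ℝ Q)
    (Ξ' : Finset (Set (EuclideanSpace ℝ (Fin d))))
    (P : Set (EuclideanSpace ℝ (Fin d))) (hP : P ∈ Ξ) (hΞ' : ∀ R, R ∈ Ξ' ↔ R ≠ P ∧ R ∈ Ξ)
    (hPQ : (P ∩ Q).Nonempty)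
    (hmax : ∀ R ∈ Ξ', ¬ P ⊆ R) :
    IsStrongDeformationRetract
      ((⋃₀ (Ξ' : Set (Set (EuclideanSpace ℝ (Fin d))))) \ Q)
      ((⋃₀ (Ξ : Set (Set (EuclideanSpace ℝ (Fin d))))) \ Q) := by
  obtain ⟨hpoly, hface, hinter⟩ := hΞ
  have hcomp : ∀ R ∈ Ξ, IsCompact R := by
    intro R hR
    obtain ⟨S, rfl⟩ := hpoly R hR
    exact S.finite_toSet.isCompact_convexHull ℝ
  have hconv : Convex ℝ P := by
    obtain ⟨S, rfl⟩ := hpoly P hP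
    exact convex_convexHull ℝ _
  have hsub : (⋃₀ (Ξ' : Set (Set (EuclideanSpace ℝ (Fin d))))) ⊆
      (⋃₀ (Ξ : Set (Set (EuclideanSpace ℝ (Fin d))))) :=
    sUnion_subset_sUnion fun R hR => ((hΞ' R).1 hR).2
  have hcl' : IsClosed (⋃₀ (Ξ' : Set (Set (EuclideanSpace ℝ (Fin d))))) :=
    by
      rw [sUnion_eq_biUnion]
      exact Ξ'.finite_toSet.isClosed_biUnion fun R hR => (hcomp R ((hΞ' R).1 hR).2).isClosed
  have hPcl : IsClosed P := (hcomp P hP).isClosed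
  obtain ⟨V, q, hqP, hqQ, hV, hK0⟩ := exists_core hconv hQo hPQ
  set K : Set V := {v : V | q + (v : EuclideanSpace ℝ (Fin d)) ∈ P} with hKdef
  have hK : Convex ℝ K := by
    intro x hx y hy a b ha hb hab
    have := hconv hx hy ha hb hab
    simp only [K, mem_ofPred_eq] at *
    convert this using 1
    have : q = (a + b) • q := by rw [hab, one_smul]
    nth_rewrite 1 [this]
    simp only [Submodule.coe_add, Submodule.coe_smul, smul_add, add_smul]
    abel
  have hKcl : IsClosed K := hPcl.preimage (by fun_prop)
  have hKb : Bornology.IsBounded K := by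
    obtain ⟨M, hM⟩ := (hcomp P hP).isBounded.exists_norm_le
    refine isBounded_iff_forall_norm_le.2 ⟨M + ‖q‖, fun v hv => ?_⟩
    have h1 := hM _ hv
    have h2 : (v : EuclideanSpace ℝ (Fin d)) = (q + v) - q := by abel
    calc ‖v‖ = ‖(v : EuclideanSpace ℝ (Fin d))‖ := rfl
      _ = ‖(q + (v : EuclideanSpace ℝ (Fin d))) - q‖ := by rw [← h2]
      _ ≤ _ := (norm_sub_le _ _).trans (by linarith)
  have habs : Absorbent ℝ K := absorbent_nhds_zero hK0
  let pV : EuclideanSpace ℝ (Fin d) →L[ℝ] V := V.orthogonalProjectionOnto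
  have hpV : ∀ v : V, pV v = v := fun v => V.orthogonalProjectionOnto_mem_subspace_eq_self v
  let g : EuclideanSpace ℝ (Fin d) → ℝ := fun x => gauge K (pV (x - q))
  have hg : Continuous g := (continuous_gauge hK hK0).comp (by fun_prop)
  have hrep : ∀ x ∈ P, ∃ v : V, v ∈ K ∧ x = q + v := fun x hx =>
    ⟨⟨x - q, hV x hx⟩, by simpa [K] using hx, by simp⟩
  have hgv : ∀ v : V, g (q + v) = gauge K v := fun v => by simp [g, hpV]
  have hg1 : ∀ x ∈ P, g x ≤ 1 := by
    intro x hx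
    obtain ⟨v, hv, rfl⟩ := hrep x hx
    rw [hgv]; exact gauge_le_one_of_mem hv
  have hgpos : ∀ x ∈ P \ Q, 0 < g x := by
    rintro x ⟨hx, hxQ⟩
    obtain ⟨v, hv, rfl⟩ := hrep x hx
    rw [hgv, gauge_pos habs ((NormedSpace.isVonNBounded_iff ℝ).2 hKb)]
    rintro rfl
    simp [hqQ] at hxQ
  -- points on other members are on the boundary
  have hbd : ∀ x ∈ P, x ∈ ⋃₀ (Ξ' : Set (Set (EuclideanSpace ℝ (Fin d)))) → g x = 1 := by
    rintro x hx ⟨R, hR, hxR⟩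
    by_contra hne
    have hlt := lt_of_le_of_ne (hg1 x hx) hne
    obtain ⟨l, hl⟩ := (hinter P hP R ((hΞ' R).1 hR).2).1 ⟨x, hx, hxR⟩
    apply hmax R hR
    obtain ⟨v, hv, rfl⟩ := hrep x hx
    rw [hgv, gauge_lt_one_iff_mem_interior hK hK0] at hlt
    intro z hz
    obtain ⟨w, hw, rfl⟩ := hrep z hz
    have hxl : q + (v : EuclideanSpace ℝ (Fin d)) ∈ P ∩ R := ⟨hx, hxR⟩
    rw [hl] at hxl
    suffices h : q + (w : EuclideanSpace ℝ (Fin d)) ∈ P ∩ R from h.2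
    rw [hl]
    have hc : Continuous (fun s : ℝ => v + s • (v - w)) := by fun_prop
    have hnear : (fun s : ℝ => v + s • (v - w)) ⁻¹' (interior K) ∈ 𝓝 (0 : ℝ) :=
      (isOpen_interior.preimage hc).mem_nhds (by simpa using hlt)
    obtain ⟨ε, hε, hb⟩ := Metric.mem_nhds_iff.1 hnear
    have hmem := interior_subset (hb (show ε / 2 ∈ Metric.ball (0 : ℝ) ε by
      rw [Metric.mem_ball, Real.dist_eq, sub_zero, abs_of_pos (by linarith)]; linarith))
    have h3 := hxl.2 _ hmem
    simp only [map_add, Submodule.coe_add, Submodule.coe_smul, map_smul, smul_eq_mul,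
      Submodule.coe_sub, map_sub] at h3
    refine ⟨hz, fun y hy => (hxl.2 y hy).trans ?_⟩
    simp only [map_add]
    nlinarith
  -- boundary points are on other members
  have hbd2 : ∀ x ∈ P, g x = 1 → x ∈ ⋃₀ (Ξ' : Set (Set (EuclideanSpace ℝ (Fin d)))) := by
    intro x hx hgx
    obtain ⟨v, hv, rfl⟩ := hrep x hx
    rw [hgv] at hgx
    have hvi : v ∉ interior K := by
      rw [← gauge_lt_one_iff_mem_interior hK hK0]; linarith
    obtain ⟨f, hf⟩ := geometric_hahn_banach_open_point hK.interior isOpen_interior hvi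
    have h0i : (0 : V) ∈ interior K := mem_interior_iff_mem_nhds.2 hK0
    have hfK : ∀ w ∈ K, f w ≤ f v := by
      intro w hw
      have hwc : w ∈ closure (interior K) := by
        rw [hK.closure_interior_eq_closure_of_nonempty_interior ⟨0, h0i⟩]
        exact subset_closure hw
      exact closure_minimal (fun a ha => (hf a ha).le)
        (isClosed_le f.continuous continuous_const) hwc
    let l : EuclideanSpace ℝ (Fin d) →L[ℝ] ℝ := f.comp pV
    have hl : ∀ w : V, l w = f w := fun w => by simp [l, hpV]
    let F := {y ∈ P | ∀ z ∈ P, l z ≤ l y}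
    have hF : F ∈ Ξ := hface P hP F (fun _ => ⟨l, rfl⟩)
    have hxF : q + (v : EuclideanSpace ℝ (Fin d)) ∈ F := by
      refine ⟨hx, fun z hz => ?_⟩
      obtain ⟨w, hw, rfl⟩ := hrep z hz
      simp only [map_add, hl]
      linarith [hfK w hw]
    refine ⟨F, (hΞ' F).2 ⟨?_, hF⟩, hxF⟩
    intro hFP
    have hqF : q ∈ F := hFP ▸ hqP
    have h1 := hqF.2 _ hx
    have h2 := hf 0 h0i
    simp only [map_add, hl] at h1
    simp only [map_zero] at h2
    linarith
  classical
  let h : EuclideanSpace ℝ (Fin d) × ℝ → EuclideanSpace ℝ (Fin d) := fun p =>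
    if p.1 ∈ P then q + (1 - p.2 + p.2 * (g p.1)⁻¹) • (p.1 - q) else p.1
  have hfix : ∀ x ∈ ⋃₀ (Ξ' : Set (Set (EuclideanSpace ℝ (Fin d)))), ∀ t, h (x, t) = x := by
    intro x hx t
    simp only [h]
    split_ifs with hxP
    · rw [hbd x hxP hx]; simp
    · rfl
  have hcont : ContinuousOn h
      (((P \ Q) ×ˢ univ) ∪ ((⋃₀ (Ξ' : Set (Set (EuclideanSpace ℝ (Fin d)))) \ Q) ×ˢ univ)) := by
    apply ContinuousOn.union_of_isClosed
    · have : ContinuousOn (fun p : EuclideanSpace ℝ (Fin d) × ℝ =>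
          q + (1 - p.2 + p.2 * (g p.1)⁻¹) • (p.1 - q)) ((P \ Q) ×ˢ univ) := by
        have hi : ContinuousOn (fun p : EuclideanSpace ℝ (Fin d) × ℝ => (g p.1)⁻¹)
            ((P \ Q) ×ˢ univ) :=
          ContinuousOn.inv₀ (by fun_prop) fun p hp => (hgpos p.1 hp.1).ne'
        fun_prop
      refine this.congr fun p hp => ?_
      simp only [h, if_pos hp.1.1]
    · refine continuousOn_fst.congr fun p hp => ?_
      exact hfix p.1 hp.1.1 p.2
    · exact (hPcl.sdiff hQo).prod isClosed_univ
    · exact (hcl'.sdiff hQo).prod isClosed_univ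
  have hcover : ∀ x ∈ (⋃₀ (Ξ : Set (Set (EuclideanSpace ℝ (Fin d))))) \ Q,
      x ∈ P \ Q ∨ x ∈ ⋃₀ (Ξ' : Set (Set (EuclideanSpace ℝ (Fin d)))) \ Q := by
    rintro x ⟨⟨R, hR, hxR⟩, hxQ⟩
    by_cases hRP : R = P
    · exact Or.inl ⟨hRP ▸ hxR, hxQ⟩
    · exact Or.inr ⟨⟨R, (hΞ' R).2 ⟨hRP, hR⟩, hxR⟩, hxQ⟩
  -- radial motion stays in `P \ Q`
  have hout : ∀ x ∉ Q, ∀ c : ℝ, 1 ≤ c → q + c • (x - q) ∉ Q := by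
    intro x hx c hc hcQ
    apply hx
    have hc0 : 0 < c := by linarith
    have := hQconv hqQ hcQ (a := 1 - c⁻¹) (b := c⁻¹)
      (sub_nonneg.2 (inv_le_one_of_one_le₀ hc)) (by positivity) (by ring)
    convert this using 1
    rw [smul_add, smul_smul, inv_mul_cancel₀ hc0.ne', one_smul, sub_smul, one_smul]
    abel
  have hend : ∀ x ∈ P \ Q, q + (g x)⁻¹ • (x - q) ∈ P ∧
      q + (g x)⁻¹ • (x - q) ∈ ⋃₀ (Ξ' : Set (Set (EuclideanSpace ℝ (Fin d)))) := by
    intro x hx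
    have hp := hgpos x hx
    obtain ⟨v, hv, rfl⟩ := hrep x hx.1
    rw [hgv] at *
    have e : q + (gauge K v)⁻¹ • (q + (v : EuclideanSpace ℝ (Fin d)) - q)
        = q + (((gauge K v)⁻¹ • v : V) : EuclideanSpace ℝ (Fin d)) := by simp
    have hone : gauge K ((gauge K v)⁻¹ • v) = 1 := by
      rw [gauge_smul_of_nonneg (by positivity), smul_eq_mul, inv_mul_cancel₀ hp.ne']
    have hmem : (gauge K v)⁻¹ • v ∈ K := by
      have := (gauge_le_one_iff_mem_closure hK hK0).1 hone.le
      rwa [hKcl.closure_eq] at this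
    rw [e]
    exact ⟨hmem, hbd2 _ hmem (by rw [hgv, hone])⟩
  have hmaps : ∀ x ∈ (⋃₀ (Ξ : Set (Set (EuclideanSpace ℝ (Fin d))))) \ Q,
      ∀ t : unitInterval, h (x, t) ∈ (⋃₀ (Ξ : Set (Set (EuclideanSpace ℝ (Fin d))))) \ Q := by
    intro x hx t
    rcases hcover x hx with hxP | hx'
    · have h1 := (one_le_inv₀ (hgpos x hxP)).2 (hg1 x hxP.1)
      have ht0 := t.2.1
      have ht1 := t.2.2
      simp only [h, if_pos hxP.1]
      refine ⟨⟨P, hP, ?_⟩, hout x hxP.2 _ (by nlinarith)⟩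
      have := hconv hxP.1 (hend x hxP).1 (a := 1 - t) (b := t) (by linarith) ht0 (by ring)
      convert this using 1
      module
    · rw [hfix x hx'.1]; exact hx
  refine ⟨sdiff_subset_sdiff_left hsub,
    ⟨fun p => ⟨h (p.1, p.2), hmaps p.1 p.1.2 p.2⟩, ?_⟩, ?_, ?_, ?_⟩
  · apply Continuous.subtype_mk
    refine hcont.comp_continuous (f := fun p : ↥((⋃₀ (Ξ : Set (Set (EuclideanSpace ℝ (Fin d))))) \ Q) × unitInterval => ((p.1 : EuclideanSpace ℝ (Fin d)), (p.2 : ℝ))) (by fun_prop) ?_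
    intro p
    rcases hcover p.1 p.1.2 with hxP | hx'
    · exact Or.inl ⟨hxP, mem_univ _⟩
    · exact Or.inr ⟨hx', mem_univ _⟩
  · intro b
    apply Subtype.ext
    simp [h]
  · intro b hb t
    apply Subtype.ext
    exact hfix b hb.1 t
  · intro b
    refine ⟨?_, (hmaps b b.2 1).2⟩
    rcases hcover b b.2 with hxP | hx'
    · have := (hend b hxP).2
      simpa [h, hxP.1] using this
    · have := hfix b hx'.1 (1 : unitInterval)
      simp only [ContinuousMap.coe_mk]
      rw [this]; exact hx'.1

theorem main_aux {d : ℕ} (n : ℕ) : ∀ (Ξ : Finset (Set (EuclideanSpace ℝ (Fin d))))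
    (_ : Ξ.card = n) (_ : IsPolytopalComplex Ξ)
    (Q : Set (EuclideanSpace ℝ (Fin d))) (_ : IsOpen Q) (_ : Convex ℝ Q),
    IsStrongDeformationRetract
      (⋃₀ {P : Set (EuclideanSpace ℝ (Fin d)) | P ∈ Ξ ∧ P ∩ Q = ∅})
      ((⋃₀ (Ξ : Set (Set (EuclideanSpace ℝ (Fin d))))) \ Q) := by
  classical
  induction n with
  | zero =>
    intro Ξ hc _ Q _ _
    have : Ξ = ∅ := Finset.card_eq_zero.1 hc
    subst this
    convert sdr_refl (∅ : Set (EuclideanSpace ℝ (Fin d))) using 1 <;> simp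
  | succ n ih =>
    intro Ξ hc hΞ Q hQo hQc
    by_cases hex : ∃ P ∈ Ξ, (P ∩ Q).Nonempty
    · have hne : (Ξ.filter fun P => (P ∩ Q).Nonempty).Nonempty := by
        obtain ⟨P, hP, h⟩ := hex
        exact ⟨P, Finset.mem_filter.2 ⟨hP, h⟩⟩
      obtain ⟨P, hPm⟩ := Finset.exists_maximal hne
      obtain ⟨hP, hPQ⟩ := Finset.mem_filter.1 hPm.1
      have hΞ' : ∀ R, R ∈ Ξ.erase P ↔ R ≠ P ∧ R ∈ Ξ := fun R => Finset.mem_erase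
      have hmax : ∀ R ∈ Ξ.erase P, ¬ P ⊆ R := by
        intro R hR hPR
        obtain ⟨h1, h2⟩ := (hΞ' R).1 hR
        exact h1 (Subset.antisymm (hPm.2 (Finset.mem_filter.2
          ⟨h2, hPQ.mono (inter_subset_inter_left _ hPR)⟩) hPR) hPR)
      have hs := step Ξ hΞ Q hQo hQc (Ξ.erase P) P hP hΞ' hPQ hmax
      have hcx : IsPolytopalComplex (Ξ.erase P) := by
        refine ⟨fun R hR => hΞ.1 R ((hΞ' R).1 hR).2, fun R hR F hF => ?_, fun R hR R' hR' =>
          hΞ.2.2 R ((hΞ' R).1 hR).2 R' ((hΞ' R').1 hR').2⟩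
        refine (hΞ' F).2 ⟨?_, hΞ.2.1 R ((hΞ' R).1 hR).2 F hF⟩
        rintro rfl
        exact hmax R hR hF.subset
      have hi := ih (Ξ.erase P) (by rw [Finset.card_erase_of_mem hP, hc]; rfl) hcx Q hQo hQc
      have he : {R : Set (EuclideanSpace ℝ (Fin d)) | R ∈ Ξ.erase P ∧ R ∩ Q = ∅}
          = {R | R ∈ Ξ ∧ R ∩ Q = ∅} := by
        ext R
        simp only [mem_ofPred_eq, hΞ']
        constructor
        · rintro ⟨⟨_, h⟩, h'⟩; exact ⟨h, h'⟩
        · rintro ⟨h, h'⟩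
          refine ⟨⟨?_, h⟩, h'⟩
          rintro rfl
          exact hPQ.ne_empty h'
      rw [he] at hi
      exact sdr_trans hi hs
    · push Not at hex
      convert sdr_refl (⋃₀ (Ξ : Set (Set (EuclideanSpace ℝ (Fin d)))) \ Q) using 1
      ext x
      simp only [mem_sUnion, mem_ofPred_eq, mem_sdiff, Finset.mem_coe]
      constructor
      · rintro ⟨R, ⟨hR, h⟩, hx⟩
        exact ⟨⟨R, hR, hx⟩, fun hq => (h ▸ (⟨hx, hq⟩ : x ∈ R ∩ Q) : x ∈ (∅ : Set _))⟩
      · rintro ⟨⟨R, hR, hx⟩, _⟩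
        exact ⟨R, ⟨hR, hex R hR⟩, hx⟩

/-- For a finite polytopal complex `Ξ` and an open convex set `Q`, the union of the members
of `Ξ` disjoint from `Q` is a strong deformation retract of `(⋃ Ξ) \ Q`. -/
theorem statement1 {d : ℕ} (Ξ : Finset (Set (EuclideanSpace ℝ (Fin d))))
    (hΞ : IsPolytopalComplex Ξ)
    (Q : Set (EuclideanSpace ℝ (Fin d))) (hQo : IsOpen Q) (hQconv : Convex ℝ Q) :
    IsStrongDeformationRetract
      (⋃₀ {P : Set (EuclideanSpace ℝ (Fin d)) | P ∈ Ξ ∧ P ∩ Q = ∅})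
      ((⋃₀ (Ξ : Set (Set (EuclideanSpace ℝ (Fin d))))) \ Q) := by
  exact main_aux _ Ξ rfl hΞ Q hQo hQconv
end

section
/- Let P, Q ⊆ ℝ^d be polytopes with P ∩ Q ≠ ∅. Then (∂P) \ Q is homotopy equivalent to P \ Q. -/
open Filter Topology

section ExitTime

variable {E : Type*} [NormedAddCommGroup E] [NormedSpace ℝ E]

/-- The last time at which the ray from `c` through `y` is in `P`. -/
noncomputable def exitTime (P : Set E) (c y : E) : ℝ :=
  sSup {t : ℝ | c + t • (y - c) ∈ P}

lemma exitTime_isGreatest {P : Set E} (hP : IsCompact P) {c y : E}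
    (hy : y ∈ P) (hne : y ≠ c) :
    IsGreatest {t : ℝ | c + t • (y - c) ∈ P} (exitTime P c y) := by
  have hpos : 0 < ‖y - c‖ := norm_pos_iff.2 (sub_ne_zero.2 hne)
  have hcl : IsClosed {t : ℝ | c + t • (y - c) ∈ P} :=
    hP.isClosed.preimage (by fun_prop : Continuous fun t : ℝ => c + t • (y - c))
  have hbd : BddAbove {t : ℝ | c + t • (y - c) ∈ P} := by
    obtain ⟨R, hR⟩ := hP.isBounded.exists_norm_le
    refine ⟨(R + ‖c‖) / ‖y - c‖, fun t ht => ?_⟩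
    rw [le_div_iff₀ hpos]
    have h1 := hR _ ht
    have h2 : ‖t • (y - c)‖ ≤ ‖c + t • (y - c)‖ + ‖c‖ := by
      have := norm_sub_le (c + t • (y - c)) c
      simpa using this
    rw [norm_smul] at h2
    have h3 : t * ‖y - c‖ ≤ ‖t‖ * ‖y - c‖ :=
      mul_le_mul_of_nonneg_right (le_abs_self t) hpos.le
    linarith
  have hn : {t : ℝ | c + t • (y - c) ∈ P}.Nonempty := ⟨1, by simpa using hy⟩
  exact ⟨hcl.csSup_mem hn hbd, fun t ht => le_csSup hbd ht⟩

lemma one_le_exitTime {P : Set E} (hP : IsCompact P) {c y : E}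
    (hy : y ∈ P) (hne : y ≠ c) : 1 ≤ exitTime P c y :=
  (exitTime_isGreatest hP hy hne).2 (by simpa using hy)

lemma ray_mem {P : Set E} (hc : Convex ℝ P) {c y : E} (hcP : c ∈ P) {t s : ℝ}
    (hs : c + s • (y - c) ∈ P) (h0 : 0 ≤ t) (hts : t ≤ s) : c + t • (y - c) ∈ P := by
  rcases h0.eq_or_lt with rfl | h0
  · simpa using hcP
  have hs0 : 0 < s := h0.trans_le hts
  have := hc.add_smul_sub_mem hcP hs (t := t / s) ⟨by positivity, (div_le_one hs0).2 hts⟩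
  convert this using 2
  rw [add_sub_cancel_left, smul_smul, div_mul_cancel₀ _ hs0.ne']

lemma exists_extend (T : Finset E) (w : E → ℝ) (hw : ∀ s ∈ T, 0 < w s) (hw1 : ∑ s ∈ T, w s = 1)
    (v : E) (hv : v ∈ affineSpan ℝ (T : Set E)) :
    ∃ ε : ℝ, 0 < ε ∧ (∑ s ∈ T, w s • s) + ε • ((∑ s ∈ T, w s • s) - v) ∈
      convexHull ℝ (T : Set E) := by
  have hr : (T : Set E) = Set.range (fun x : T => (x : E)) := by simp
  rw [hr] at hv
  obtain ⟨b, hb1, hb⟩ := eq_affineCombination_of_mem_affineSpan_of_fintype hv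
  rw [Finset.affineCombination_eq_linear_combination _ _ _ hb1] at hb
  have hev : ∀ᶠ ε : ℝ in 𝓝[>] 0, ∀ s : T, 0 ≤ w s + ε * (w s - b s) := by
    rw [eventually_all]
    intro s
    have hcont : Tendsto (fun ε : ℝ => w s + ε * (w s - b s)) (𝓝 0) (𝓝 (w s + 0 * (w s - b s))) :=
      Continuous.tendsto (by fun_prop) 0
    have h0 : 0 < w s + 0 * (w s - b s) := by simpa using hw s s.2
    exact ((hcont.eventually (lt_mem_nhds h0)).filter_mono nhdsWithin_le_nhds).mono
      fun _ h => h.le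
  obtain ⟨ε, hε, hεpos⟩ := (hev.and self_mem_nhdsWithin).exists
  refine ⟨ε, hεpos, ?_⟩
  rw [← Finset.sum_coe_sort T w] at hw1
  rw [← Finset.sum_coe_sort T (fun s => w s • s), hb]
  have : (∑ i : T, w i • (i : E)) + ε • ((∑ i : T, w i • (i : E)) - ∑ i : T, b i • (i : E)) =
      ∑ i : T, (w i + ε * (w i - b i)) • (i : E) := by
    rw [← Finset.sum_sub_distrib, Finset.smul_sum, ← Finset.sum_add_distrib]
    refine Finset.sum_congr rfl fun i _ => ?_
    module
  rw [this]
  refine (convex_convexHull ℝ (T : Set E)).sum_mem (fun i _ => hε i) ?_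
    (fun i _ => subset_convexHull ℝ _ i.2)
  rw [Finset.sum_add_distrib, ← Finset.mul_sum, Finset.sum_sub_distrib, hw1, hb1]
  simp

/-- A polytope is locally a cone at each of its points. -/
lemma local_cone [FiniteDimensional ℝ E] (S : Finset E) (v : E)
    (hv : v ∈ convexHull ℝ (S : Set E)) :
    ∃ δ : ℝ, 0 < δ ∧ ∀ y ∈ convexHull ℝ (S : Set E), ∀ η : ℝ, 0 < η → ‖y - v‖ ≤ η * δ →
      v + η⁻¹ • (y - v) ∈ convexHull ℝ (S : Set E) := by
  classical
  have hPc : IsCompact (convexHull ℝ (S : Set E)) :=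
    S.finite_toSet.isCompact_convexHull ℝ
  have hdelta : ∀ T : Finset E, ∃ δ : ℝ, 0 < δ ∧
      (v ∉ affineSpan ℝ (T : Set E) → ∀ u ∈ affineSpan ℝ (T : Set E), δ ≤ ‖u - v‖) := by
    intro T
    by_cases h : v ∈ affineSpan ℝ (T : Set E)
    · exact ⟨1, one_pos, fun h' => absurd h h'⟩
    · have hcl : IsClosed ((affineSpan ℝ (T : Set E)) : Set E) :=
        AffineSubspace.closed_of_finiteDimensional _
      obtain ⟨δ, hδ, hb⟩ := Metric.isOpen_iff.1 hcl.isOpen_compl v h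
      refine ⟨δ, hδ, fun _ u hu => ?_⟩
      by_contra hlt
      push Not at hlt
      exact hb (by rwa [Metric.mem_ball, dist_eq_norm]) hu
  choose D hD0 hD using hdelta
  obtain ⟨δ, hδ0, hδ⟩ : ∃ δ : ℝ, 0 < δ ∧ ∀ T ∈ S.powerset, δ ≤ D T := by
    have hne : S.powerset.Nonempty := ⟨∅, by simp⟩
    refine ⟨S.powerset.inf' hne D, ?_, fun T hT => Finset.inf'_le _ hT⟩
    rw [Finset.lt_inf'_iff]
    exact fun T _ => hD0 T
  refine ⟨δ, hδ0, fun y hy η hη hyv => ?_⟩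
  by_cases hne : y = v
  · subst hne; simpa using hy
  have hG := exitTime_isGreatest hPc hy hne
  have h1 := one_le_exitTime hPc hy hne
  set t := exitTime (convexHull ℝ (S : Set E)) v y with ht
  have hpos : 0 < ‖y - v‖ := norm_pos_iff.2 (sub_ne_zero.2 hne)
  have hfar : δ ≤ t * ‖y - v‖ := by
    obtain ⟨w, hw0, hw1, hw⟩ := Finset.mem_convexHull'.1 hG.1
    set T := S.filter (fun s => w s ≠ 0) with hT
    have hTS : T ⊆ S := Finset.filter_subset _ _
    have hwT : ∀ s ∈ T, 0 < w s := fun s hs =>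
      lt_of_le_of_ne (hw0 s (hTS hs)) (Finset.mem_filter.1 hs).2.symm
    have hwT1 : ∑ s ∈ T, w s = 1 := by
      rw [hT, Finset.sum_filter_ne_zero]; exact hw1
    have hwT2 : ∑ s ∈ T, w s • s = v + t • (y - v) := by
      rw [← hw]
      refine Finset.sum_subset hTS fun s hs hs' => ?_
      have : w s = 0 := by
        by_contra h
        exact hs' (Finset.mem_filter.2 ⟨hs, h⟩)
      simp [this]
    have hmem : v + t • (y - v) ∈ convexHull ℝ (T : Set E) := by
      rw [← hwT2]
      exact (convex_convexHull ℝ (T : Set E)).sum_mem (fun i hi => (hwT i hi).le) hwT1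
        (fun i hi => subset_convexHull ℝ _ hi)
    have hvT : v ∉ affineSpan ℝ (T : Set E) := by
      intro hvT
      obtain ⟨ε, hε, hx⟩ := exists_extend T w hwT hwT1 v hvT
      rw [hwT2] at hx
      have hx' := convexHull_mono (by exact_mod_cast hTS : (T : Set E) ⊆ S) hx
      have h2 : t + ε * t ≤ t := hG.2 (by
        change v + (t + ε * t) • (y - v) ∈ convexHull ℝ (S : Set E)
        convert hx' using 1
        module)
      nlinarith
    have h3 := hD T hvT _ (convexHull_subset_affineSpan _ hmem)
    have h4 := hδ T (Finset.mem_powerset.2 hTS)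
    rw [add_sub_cancel_left, norm_smul, Real.norm_of_nonneg (by linarith)] at h3
    linarith
  refine ray_mem (convex_convexHull ℝ _) hv hG.1 (by positivity) ?_
  rw [inv_le_iff_one_le_mul₀ hη]
  by_contra hlt
  push Not at hlt
  have h5 : η * δ ≤ η * (t * ‖y - v‖) := mul_le_mul_of_nonneg_left hfar hη.le
  nlinarith

lemma continuousOn_exitTime [FiniteDimensional ℝ E] (S : Finset E) (c : E)
    (hc : c ∈ convexHull ℝ (S : Set E)) :
    ContinuousOn (exitTime (convexHull ℝ (S : Set E)) c) (convexHull ℝ (S : Set E) \ {c}) := by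
  have hPc : IsCompact (convexHull ℝ (S : Set E)) :=
    S.finite_toSet.isCompact_convexHull ℝ
  have hconv := convex_convexHull ℝ (S : Set E)
  have hcone := fun v hv => local_cone S v hv
  generalize convexHull ℝ (S : Set E) = P at hPc hconv hc hcone ⊢
  rintro y₀ ⟨hy₀, hne₀⟩
  have hne₀ : y₀ ≠ c := hne₀
  have hG := exitTime_isGreatest hPc hy₀ hne₀
  have h1 := one_le_exitTime hPc hy₀ hne₀
  refine tendsto_order.2 ⟨fun t ht => ?_, fun t ht => ?_⟩
  · -- lower semicontinuity
    obtain ⟨r, hr, hrτ⟩ := exists_between (max_lt ht (by linarith : (0:ℝ) < exitTime P c y₀))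
    set τ := exitTime P c y₀ with hτ
    have htr : t < r := (le_max_left _ _).trans_lt hr
    have hr0 : 0 < r := (le_max_right _ _).trans_lt hr
    have hτ0 : 0 < τ := by linarith
    obtain ⟨δ, hδ, hδP⟩ := hcone y₀ hy₀
    have hrt : r / τ < 1 := (div_lt_one hτ0).2 hrτ
    obtain ⟨η, hη, hη1, hη2⟩ : ∃ η : ℝ, 0 < η ∧ η ≤ 1 ∧ r / τ + r * η ≤ 1 := by
      refine ⟨min 1 ((1 - r / τ) / r), lt_min one_pos (div_pos (by linarith) hr0),
        min_le_left _ _, ?_⟩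
      have : r * min 1 ((1 - r / τ) / r) ≤ r * ((1 - r / τ) / r) :=
        mul_le_mul_of_nonneg_left (min_le_right _ _) hr0.le
      rw [mul_div_cancel₀ _ hr0.ne'] at this
      linarith
    have hball : Metric.ball y₀ (η * δ) ∈ 𝓝[P \ {c}] y₀ :=
      mem_nhdsWithin_of_mem_nhds (Metric.ball_mem_nhds _ (by positivity))
    filter_upwards [hball, self_mem_nhdsWithin] with y hyb hyP
    rw [Metric.mem_ball, dist_eq_norm] at hyb
    have hu := hδP y hyP.1 η hη hyb.le
    refine htr.trans_le ((exitTime_isGreatest hPc hyP.1 hyP.2).2 ?_)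
    change c + r • (y - c) ∈ P
    have hz := hG.1
    change c + τ • (y₀ - c) ∈ P at hz
    have ha : 0 ≤ r * (1 - η) / τ := div_nonneg (mul_nonneg hr0.le (by linarith)) hτ0.le
    have hb : 0 ≤ r * η := by positivity
    have hab : r * (1 - η) / τ + r * η ≤ 1 := by
      have : r * (1 - η) / τ ≤ r / τ := by
        gcongr
        nlinarith
      linarith
    have key := hconv.sum_mem (t := Finset.univ)
      (w := ![r * (1 - η) / τ, r * η, 1 - (r * (1 - η) / τ + r * η)])
      (z := ![c + τ • (y₀ - c), y₀ + η⁻¹ • (y - y₀), c])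
      (by intro i _; fin_cases i <;> simp <;> linarith)
      (by simp [Fin.sum_univ_three])
      (by intro i _; fin_cases i <;> simp <;> assumption)
    simp only [Fin.sum_univ_three, Matrix.cons_val_zero, Matrix.cons_val_one, Matrix.cons_val] at key
    convert key using 1
    match_scalars <;> field_simp <;> ring
  · -- upper semicontinuity
    have hnot : c + t • (y₀ - c) ∉ P := fun h => absurd (hG.2 h) (not_le.2 ht)
    have hopen : IsOpen {y : E | c + t • (y - c) ∈ Pᶜ} :=
      hPc.isClosed.isOpen_compl.preimage (by fun_prop)
    have hmem : {y : E | c + t • (y - c) ∈ Pᶜ} ∈ 𝓝[P \ {c}] y₀ :=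
      mem_nhdsWithin_of_mem_nhds (hopen.mem_nhds hnot)
    filter_upwards [hmem, self_mem_nhdsWithin] with y hy hyP
    by_contra hle
    push Not at hle
    exact hy (ray_mem hconv hc (exitTime_isGreatest hPc hyP.1 hyP.2).1 (by linarith) hle)

lemma mem_intrinsicInterior_iff' {P : Set E} {x : E} :
    x ∈ intrinsicInterior ℝ P ↔ x ∈ affineSpan ℝ P ∧
      ∃ ε > 0, ∀ z ∈ affineSpan ℝ P, ‖z - x‖ < ε → z ∈ P := by
  rw [mem_intrinsicInterior]
  constructor
  · rintro ⟨y, hy, rfl⟩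
    refine ⟨y.2, ?_⟩
    obtain ⟨ε, hε, h⟩ := Metric.mem_nhds_iff.1 (mem_interior_iff_mem_nhds.1 hy)
    refine ⟨ε, hε, fun z hz hzx => ?_⟩
    exact h (show (⟨z, hz⟩ : affineSpan ℝ P) ∈ Metric.ball y ε by
      rw [Metric.mem_ball, Subtype.dist_eq, dist_eq_norm]; exact hzx)
  · rintro ⟨hx, ε, hε, h⟩
    refine ⟨⟨x, hx⟩, ?_, rfl⟩
    rw [mem_interior_iff_mem_nhds, Metric.mem_nhds_iff]
    refine ⟨ε, hε, fun z hz => h z z.2 ?_⟩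
    rwa [Metric.mem_ball, Subtype.dist_eq, dist_eq_norm] at hz

lemma mem_span_ray {P : Set E} {c x : E} (hc : c ∈ P) (hx : x ∈ affineSpan ℝ P) (t : ℝ) :
    c + t • (x - c) ∈ affineSpan ℝ P := by
  have := AffineMap.lineMap_mem t (subset_affineSpan ℝ P hc) hx
  rwa [AffineMap.lineMap_apply, vsub_eq_sub, vadd_eq_add, add_comm] at this

lemma frontier_iff [FiniteDimensional ℝ E] {P : Set E} (hP : IsClosed P) {x : E} :
    x ∈ intrinsicFrontier ℝ P ↔ x ∈ P ∧ x ∉ intrinsicInterior ℝ P := by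
  rw [← intrinsicClosure_sdiff_intrinsicInterior, intrinsicClosure_eq_closure, hP.closure_eq]
  rfl

lemma ray_frontier [FiniteDimensional ℝ E] {P : Set E} (hP : IsClosed P) (hconv : Convex ℝ P)
    {c y : E} (hc : c ∈ P) (hy : y ∈ intrinsicFrontier ℝ P) {t : ℝ} (ht : 1 ≤ t)
    (hz : c + t • (y - c) ∈ P) : c + t • (y - c) ∈ intrinsicFrontier ℝ P := by
  rw [frontier_iff hP] at hy ⊢
  refine ⟨hz, fun hint => hy.2 ?_⟩
  rw [mem_intrinsicInterior_iff'] at hint ⊢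
  obtain ⟨_, ε, hε, h⟩ := hint
  have ht0 : 0 < t := by linarith
  refine ⟨subset_affineSpan ℝ P hy.1, ε / t, by positivity, fun z hzs hzy => ?_⟩
  have h1 : c + t • (z - c) ∈ P := by
    refine h _ (mem_span_ray hc hzs t) ?_
    have : c + t • (z - c) - (c + t • (y - c)) = t • (z - y) := by module
    rw [this, norm_smul, Real.norm_of_nonneg ht0.le]
    rwa [lt_div_iff₀ ht0, mul_comm] at hzy
  simpa using ray_mem hconv hc h1 zero_le_one ht

lemma exit_frontier [FiniteDimensional ℝ E] {P : Set E} (hP : IsCompact P)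
    {c y : E} (hc : c ∈ P) (hy : y ∈ P) (hne : y ≠ c) :
    c + exitTime P c y • (y - c) ∈ intrinsicFrontier ℝ P := by
  have hG := exitTime_isGreatest hP hy hne
  rw [frontier_iff hP.isClosed]
  refine ⟨hG.1, fun hint => ?_⟩
  rw [mem_intrinsicInterior_iff'] at hint
  obtain ⟨_, ε, hε, h⟩ := hint
  have hpos : 0 < ‖y - c‖ := norm_pos_iff.2 (sub_ne_zero.2 hne)
  set τ := exitTime P c y
  have h2 : τ + ε / 2 / ‖y - c‖ ≤ τ := hG.2 (by
    refine h _ (mem_span_ray hc (subset_affineSpan ℝ P hy) _) ?_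
    have : c + (τ + ε / 2 / ‖y - c‖) • (y - c) - (c + τ • (y - c)) =
      (ε / 2 / ‖y - c‖) • (y - c) := by module
    rw [this, norm_smul, Real.norm_of_nonneg (by positivity), div_mul_cancel₀ _ hpos.ne']
    linarith)
  have : 0 < ε / 2 / ‖y - c‖ := by positivity
  linarith

lemma ray_notMem {Q : Set E} (hQ : Convex ℝ Q) {c y : E} (hc : c ∈ Q) (hy : y ∉ Q) {t : ℝ}
    (ht : 1 ≤ t) : c + t • (y - c) ∉ Q := fun h =>
  hy (by simpa using ray_mem hQ hc h zero_le_one ht)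

end ExitTime

/-- For polytopes `P, Q ⊆ ℝ^d` with `P ∩ Q ≠ ∅`, the set `(∂P) \ Q` is homotopy
equivalent to `P \ Q` (where `∂P` is the relative, i.e. intrinsic, boundary of `P`). -/
theorem statement4 {d : ℕ} (P Q : Set (EuclideanSpace ℝ (Fin d)))
    (hP : IsPolytope P) (hQ : IsPolytope Q) (hPQ : (P ∩ Q).Nonempty) :
    Nonempty (ContinuousMap.HomotopyEquiv ↥(intrinsicFrontier ℝ P \ Q) ↥(P \ Q)) := by
  obtain ⟨c, hcP, hcQ⟩ := hPQ
  have hQconv : Convex ℝ Q := by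
    obtain ⟨S, rfl⟩ := hQ
    exact convex_convexHull ℝ _
  have hPconv : Convex ℝ P := by
    obtain ⟨S, rfl⟩ := hP
    exact convex_convexHull ℝ _
  have hPc : IsCompact P := by
    obtain ⟨S, rfl⟩ := hP
    exact S.finite_toSet.isCompact_convexHull ℝ
  have hcont : ContinuousOn (exitTime P c) (P \ {c}) := by
    obtain ⟨S, rfl⟩ := hP
    exact continuousOn_exitTime S c hcP
  have hfP : intrinsicFrontier ℝ P ⊆ P := intrinsicFrontier_subset hPc.isClosed
  have hneQ : ∀ y, y ∉ Q → y ≠ c := fun y hy h => hy (h ▸ hcQ)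
  have hτ : Continuous (fun y : ↥(P \ Q) => exitTime P c y) :=
    hcont.comp_continuous continuous_subtype_val fun y => ⟨y.2.1, hneQ _ y.2.2⟩
  have hτ' : Continuous (fun y : ↥(intrinsicFrontier ℝ P \ Q) => exitTime P c y) :=
    hcont.comp_continuous continuous_subtype_val fun y => ⟨hfP y.2.1, hneQ _ y.2.2⟩
  have hτ1 : ∀ y ∈ P, y ∉ Q → 1 ≤ exitTime P c y := fun y hy hyQ =>
    one_le_exitTime hPc hy (hneQ y hyQ)
  have hs1 : ∀ (s : unitInterval) (y), y ∈ P → y ∉ Q →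
      1 ≤ exitTime P c y + (s : ℝ) * (1 - exitTime P c y) := fun s y hy hyQ => by
    have := hτ1 y hy hyQ
    nlinarith [s.2.1, s.2.2]
  have hs2 : ∀ (s : unitInterval) (y), y ∈ P → y ∉ Q →
      exitTime P c y + (s : ℝ) * (1 - exitTime P c y) ≤ exitTime P c y := fun s y hy hyQ => by
    have := hτ1 y hy hyQ
    nlinarith [s.2.1, s.2.2]
  have hsP : ∀ (s : unitInterval) (y), y ∈ P → y ∉ Q →
      c + (exitTime P c y + (s : ℝ) * (1 - exitTime P c y)) • (y - c) ∈ P := fun s y hy hyQ =>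
    ray_mem hPconv hcP (exitTime_isGreatest hPc hy (hneQ y hyQ)).1
      (by linarith [hs1 s y hy hyQ]) (hs2 s y hy hyQ)
  refine ⟨⟨⟨fun y => ⟨y, hfP y.2.1, y.2.2⟩, by fun_prop⟩,
    ⟨fun y => ⟨c + exitTime P c y • ((y : EuclideanSpace ℝ (Fin d)) - c),
      exit_frontier hPc hcP y.2.1 (hneQ _ y.2.2),
      ray_notMem hQconv hcQ y.2.2 (hτ1 _ y.2.1 y.2.2)⟩, by fun_prop⟩,
    ⟨⟨⟨fun p => ⟨c + (exitTime P c p.2 + (p.1 : ℝ) * (1 - exitTime P c p.2)) •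
        ((p.2 : EuclideanSpace ℝ (Fin d)) - c),
        ray_frontier hPc.isClosed hPconv hcP p.2.2.1 (hs1 _ _ (hfP p.2.2.1) p.2.2.2)
          (hsP _ _ (hfP p.2.2.1) p.2.2.2),
        ray_notMem hQconv hcQ p.2.2.2 (hs1 _ _ (hfP p.2.2.1) p.2.2.2)⟩, ?_⟩, ?_, ?_⟩⟩,
    ⟨⟨⟨fun p => ⟨c + (exitTime P c p.2 + (p.1 : ℝ) * (1 - exitTime P c p.2)) •
        ((p.2 : EuclideanSpace ℝ (Fin d)) - c),
        hsP _ _ p.2.2.1 p.2.2.2,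
        ray_notMem hQconv hcQ p.2.2.2 (hs1 _ _ p.2.2.1 p.2.2.2)⟩, ?_⟩, ?_, ?_⟩⟩⟩⟩
  · have := hτ'.comp (continuous_snd (X := unitInterval))
    simp only [Function.comp_def] at this
    fun_prop
  · intro x; ext1; simp
  · intro x; ext1; simp
  · have := hτ.comp (continuous_snd (X := unitInterval))
    simp only [Function.comp_def] at this
    fun_prop
  · intro x; ext1; simp
  · intro x; ext1; simp
end
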